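/- Let p : I × I → [0,∞) be a kernel that is substochastic (Σ_t p(s,t) ≤ 1 for every s ∈ I) and satisfies hypotheses (H1), (H2), (H3) and (H4). Fix z ∈ I, q ∈ (0,1), C > 0, and let b be a q-perturbation of p on Δ_z. Then for every end ω of I with ω|_{|z|} = z there exists k ≥ |z| such that for every s ∈ Δ_{ω|k} there exist c > 0 and ℓ ≥ |z| with G_b(s,t) ≥ c·G_p(e,t) for all t ∈ Δ_{ω|ℓ}; that is, the boundary value at ω of the Martin-type kernel G_b(s,·)/G_p(e,·) is strictly positive for all s sufficiently close to ω. (This is the classical content of Proposition 3.5 of the paper.) -/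

import Mathlib

open scoped ENNReal

namespace Paper

/-- Words in the two letters `α, β`: the free monoid on two generators, as `List Bool`.
The head of the list is the leftmost letter. -/
abbrev Word := List Bool

/-- Length of the longest common prefix of two lists. -/
def lcpLen : List Bool → List Bool → ℕ
  | a :: s, b :: t => if a = b then lcpLen s t + 1 else 0
  | _, _ => 0

/-- Length of the longest common suffix of two words. -/
def lcsLen (s t : Word) : ℕ := lcpLen s.reverse t.reverse

/-- The tree metric on `Word`: `d(s,t) = (|s| - k) + (|t| - k)`, `k` the length of the
longest common suffix. -/
def treeDist (s t : Word) : ℕ := (s.length - lcsLen s t) + (t.length - lcsLen s t)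

/-- The branch `Δ_x = {u x : u ∈ I}` of words having `x` as a suffix. -/
def Delta (x : Word) : Set Word := {s | x <:+ s}

/-- The geodesic segment `[s,t] = {v : d(s,v) + d(v,t) = d(s,t)}`. -/
def geodesic (s t : Word) : Set Word := {v | treeDist s v + treeDist v t = treeDist s t}

/-- Paths of `n` steps from `s` to `t` staying in `Ω`. -/
def pathSet {X : Type*} (Ω : Set X) (n : ℕ) (s t : X) : Set (Fin (n + 1) → X) :=
  {σ | σ 0 = s ∧ σ (Fin.last n) = t ∧ ∀ i, σ i ∈ Ω}

/-- The weight `∏ a(s_i, s_{i+1})` of a path, as an extended nonnegative real. -/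
noncomputable def weightE {X : Type*} (a : X → X → ℝ) (n : ℕ) (σ : Fin (n + 1) → X) : ℝ≥0∞ :=
  ∏ i : Fin n, ENNReal.ofReal (a (σ i.castSucc) (σ i.succ))

/-- The `n`-step kernel `a⁽ⁿ⁾(s,t)` of the kernel `a` on `Ω`, with values in `[0,∞]`. -/
noncomputable def nStepE {X : Type*} (Ω : Set X) (a : X → X → ℝ) (n : ℕ) (s t : X) : ℝ≥0∞ :=
  ∑' σ : pathSet Ω n s t, weightE a n σ.1

/-- The Green kernel `G_a(s,t) = Σ_n a⁽ⁿ⁾(s,t)` of `a` on `Ω`, with values in `[0,∞]`. -/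
noncomputable def greenE {X : Type*} (Ω : Set X) (a : X → X → ℝ) (s t : X) : ℝ≥0∞ :=
  ∑' n : ℕ, nStepE Ω a n s t

/-- The weight of a path, real version (for signed kernels). -/
noncomputable def weightR {X : Type*} (a : X → X → ℝ) (n : ℕ) (σ : Fin (n + 1) → X) : ℝ :=
  ∏ i : Fin n, a (σ i.castSucc) (σ i.succ)

/-- The `n`-step kernel of a signed kernel `a` on `Ω`. -/
noncomputable def nStepR {X : Type*} (Ω : Set X) (a : X → X → ℝ) (n : ℕ) (s t : X) : ℝ :=
  ∑' σ : pathSet Ω n s t, weightR a n σ.1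

/-- The Green kernel of a signed kernel `a` on `Ω`, as a real number. -/
noncomputable def greenR {X : Type*} (Ω : Set X) (a : X → X → ℝ) (s t : X) : ℝ :=
  ∑' n : ℕ, nStepR Ω a n s t

/-- The Green kernel of `|a|`: finiteness of this expresses absolute convergence of the
series defining the Green kernel of `a`. -/
noncomputable def greenAbs {X : Type*} (Ω : Set X) (a : X → X → ℝ) (s t : X) : ℝ≥0∞ :=
  greenE Ω (fun u v => |a u v|) s t

/-- (H1): finite range `S`. -/
def H1 (p : Word → Word → ℝ) (S : ℕ) : Prop := ∀ s t, S < treeDist s t → p s t = 0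

/-- (H2): nonzero transition probabilities are bounded below by `δ₀`. -/
def H2 (p : Word → Word → ℝ) (δ₀ : ℝ) : Prop := ∀ s t, 0 < p s t → δ₀ ≤ p s t

/-- (H3): uniform irreducibility. -/
def H3 (p : Word → Word → ℝ) (δ₀ : ℝ) (K : ℕ) : Prop :=
  ∀ s t, treeDist s t = 1 → ∃ k ≤ K, ∃ u : ℕ → Word, u 0 = s ∧ u k = t ∧
    ∀ i < k, ∀ x : Word, δ₀ ≤ p (u i ++ x) (u (i + 1) ++ x)

/-- The operator `(Pf)(s) = Σ_t p(s,t) f(t)` extends to a bounded operator of norm at most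
`lam` on `ℓ²(X, m)`, expressed via the associated bilinear form on finitely supported
functions. -/
def opNormBound {X : Type*} (m : X → ℝ) (p : X → X → ℝ) (lam : ℝ) : Prop :=
  ∀ f g : X → ℝ, (Function.support f).Finite → (Function.support g).Finite →
    |∑' s, m s * g s * ∑' t, p s t * f t| ≤
      lam * Real.sqrt (∑' x, m x * f x ^ 2) * Real.sqrt (∑' x, m x * g x ^ 2)

/-- (H4): there is a weight `m` for which `P` is bounded of norm at most `lam` on `ℓ²(I,m)`. -/
def H4 (p : Word → Word → ℝ) (m : Word → ℝ) (lam : ℝ) : Prop :=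
  (∀ x, 0 < m x) ∧ opNormBound m p lam

/-- Substochasticity: `Σ_t p(s,t) ≤ 1` for every `s`. -/
def Substochastic (p : Word → Word → ℝ) : Prop :=
  ∀ s, (∑' t, ENNReal.ofReal (p s t)) ≤ 1

/-- `b` is a `q`-perturbation of `p` on `Δ_z` (with constant `C`). -/
def Perturb (p b : Word → Word → ℝ) (z : Word) (q C : ℝ) : Prop :=
  ∀ s t, s ∈ Delta z → t ∈ Delta z →
    |b s t| ≤ p s t ∧ |b s t - p s t| ≤ C * q ^ s.length

/-- The word `ω|k = ω(k-1) ω(k-2) ⋯ ω(0)` of length `k` determined by an end `ω`. -/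
def endWord (ω : ℕ → Bool) (k : ℕ) : Word := (List.range k).reverse.map ω

/-- The last-entrance kernel `M_p(s,u)`: sum over paths from `s` to `u` of length at least
one whose second-to-last point lies outside `Δ_x`. -/
noncomputable def lastEnter (p : Word → Word → ℝ) (x s u : Word) : ℝ≥0∞ :=
  ∑' m : ℕ, ∑' σ : {σ : Fin (m + 2) → Word //
      σ ∈ pathSet Set.univ (m + 1) s u ∧ σ ((Fin.last m).castSucc) ∉ Delta x},
    weightE p (m + 1) σ.1

/-- The quantum integer `[n]_q = (q⁻ⁿ - qⁿ)/(q⁻¹ - q)`. -/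
noncomputable def qInt (q : ℝ) (n : ℕ) : ℝ := (q ^ (-(n : ℤ)) - q ^ (n : ℤ)) / (q⁻¹ - q)

/-- The lengths of the blocks in the canonical factorization of a word into maximal
alternating subwords. -/
def blockLens : Word → List ℕ
  | [] => []
  | [_] => [1]
  | a :: b :: rest =>
    match blockLens (b :: rest) with
    | [] => [1]
    | k :: ks => if a = b then 1 :: (k :: ks) else (k + 1) :: ks

/-- The quantum dimension `dim_q(x) = Π_i [|x_i| + 1]_q` over the blocks of `x`. -/
noncomputable def dimq (q : ℝ) (x : Word) : ℝ := ((blockLens x).map fun L => qInt q (L + 1)).prod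

/-- The classical dimension `dim(x) = Π_i (|x_i| + 1)` over the blocks of `x`. -/
noncomputable def dimn (x : Word) : ℝ := ((blockLens x).map fun L => (L + 1 : ℝ)).prod

/-- The involution `x ↦ x̄`: reverse the word and exchange the two letters. -/
def bar (x : Word) : Word := (x.map fun a => !a).reverse

/-- The fusion multiplicity `mᵗ_{r,s}`: the number of words `z` such that `r = r₀ z`,
`s = z̄ s₀`, `t = r₀ s₀` for some `r₀, s₀`. -/
noncomputable def fuse (r s t : Word) : ℕ :=
  {z : Word | ∃ r₀ s₀ : Word, r = r₀ ++ z ∧ s = bar z ++ s₀ ∧ t = r₀ ++ s₀}.ncard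

/-- A finitely supported probability measure on `Word`. -/
def IsProbMeasure (μ : Word → ℝ) : Prop :=
  (∀ x, 0 ≤ μ x) ∧ (Function.support μ).Finite ∧ ∑' x, μ x = 1

/-- The transition kernel `p_μ(s,t) = Σ_r μ(r) mᵗ_{r,s} dim_q(t)/(dim_q(r) dim_q(s))`. -/
noncomputable def pMu (q : ℝ) (μ : Word → ℝ) (s t : Word) : ℝ :=
  ∑' r, μ r * (fuse r s t : ℝ) * dimq q t / (dimq q r * dimq q s)

/-- The `q`-binomial coefficient. -/
noncomputable def qbinom (q : ℝ) (n k : ℕ) : ℝ :=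
  q ^ (-((k * (n - k) : ℕ) : ℤ)) *
    ∏ i ∈ Finset.range k, (1 - q ^ (2 * (n - i))) / (1 - q ^ (2 * (k - i)))


/-! ### Matrix powers and Green kernels with values in `[0,∞]` -/

noncomputable def pw (P : Word → Word → ℝ≥0∞) : ℕ → Word → Word → ℝ≥0∞
  | 0 => fun s t => if s = t then 1 else 0
  | n + 1 => fun s t => ∑' u, P s u * pw P n u t

noncomputable def gr (P : Word → Word → ℝ≥0∞) (s t : Word) : ℝ≥0∞ := ∑' n, pw P n s t

section gen
variable (P : Word → Word → ℝ≥0∞)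

lemma pw_zero (s t : Word) : pw P 0 s t = if s = t then 1 else 0 := rfl

lemma pw_succ (n : ℕ) (s t : Word) : pw P (n + 1) s t = ∑' u, P s u * pw P n u t := rfl

lemma tsum_ite_mul (s : Word) (f : Word → ℝ≥0∞) :
    (∑' u, (if s = u then 1 else 0) * f u) = f s := by
  rw [tsum_eq_single s]
  · simp
  · intro u hu
    simp [hu.symm]

lemma tsum_assoc (f : Word → ℝ≥0∞) (g : Word → Word → ℝ≥0∞) (h : Word → ℝ≥0∞) :
    (∑' u, f u * ∑' v, g u v * h v) = ∑' v, (∑' u, f u * g u v) * h v := by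
  simp_rw [← ENNReal.tsum_mul_left, ← ENNReal.tsum_mul_right]
  rw [ENNReal.tsum_comm]
  simp_rw [mul_assoc]

lemma pw_add (m n : ℕ) (s t : Word) :
    pw P (m + n) s t = ∑' u, pw P m s u * pw P n u t := by
  induction m generalizing s with
  | zero => simp only [zero_add, pw_zero]; rw [tsum_ite_mul]
  | succ m ih =>
    rw [show m + 1 + n = (m + n) + 1 by ring, pw_succ]
    simp_rw [ih, pw_succ]
    exact tsum_assoc _ _ _

lemma partial_succ (N : ℕ) (s t : Word) :
    ∑ n ∈ Finset.range (N + 1), pw P n s t =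
      (if s = t then 1 else 0) + ∑' u, P s u * ∑ n ∈ Finset.range N, pw P n u t := by
  rw [Finset.sum_range_succ', add_comm, pw_zero]
  congr 1
  simp_rw [pw_succ, Finset.mul_sum]
  exact (Summable.tsum_finsetSum (fun _ _ => ENNReal.summable)).symm

lemma gr_eq (s t : Word) :
    gr P s t = (if s = t then 1 else 0) + ∑' u, P s u * gr P u t := by
  unfold gr
  rw [tsum_eq_zero_add' ENNReal.summable, pw_zero]
  congr 1
  simp_rw [pw_succ, ← ENNReal.tsum_mul_left]
  exact ENNReal.tsum_comm

lemma gr_super (s t : Word) : ∑' u, P s u * gr P u t ≤ gr P s t := by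
  rw [gr_eq P s t]; exact le_add_self

lemma partial_le_gr (N : ℕ) (s t : Word) : ∑ n ∈ Finset.range N, pw P n s t ≤ gr P s t :=
  ENNReal.sum_le_tsum _

lemma pw_mul_gr_le (k : ℕ) (s u t : Word) : pw P k s u * gr P u t ≤ gr P s t := by
  unfold gr
  rw [← ENNReal.tsum_mul_left]
  calc ∑' n, pw P k s u * pw P n u t ≤ ∑' n, pw P (k + n) s t := by
        refine ENNReal.tsum_le_tsum fun n => ?_
        rw [pw_add]
        exact ENNReal.le_tsum (f := fun u => pw P k s u * pw P n u t) u
    _ ≤ ∑' n, pw P n s t :=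
        ENNReal.tsum_comp_le_tsum_of_injective (add_right_injective k) _

lemma gr_mul_pw_le (k : ℕ) (s u t : Word) : gr P s u * pw P k u t ≤ gr P s t := by
  unfold gr
  rw [← ENNReal.tsum_mul_right]
  calc ∑' n, pw P n s u * pw P k u t ≤ ∑' n, pw P (n + k) s t := by
        refine ENNReal.tsum_le_tsum fun n => ?_
        rw [pw_add]
        exact ENNReal.le_tsum (f := fun u => pw P n s u * pw P k u t) u
    _ ≤ ∑' n, pw P n s t :=
        ENNReal.tsum_comp_le_tsum_of_injective (add_left_injective k) _

lemma one_le_gr (s : Word) : 1 ≤ gr P s s := by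
  rw [gr_eq]; simp

/-- Minimum principle. -/
lemma min_principle (c : ℝ≥0∞) (t : Word) (h : Word → ℝ≥0∞) (A : Set Word)
    (hh : ∀ s, ∑' y, P s y * h y ≤ h s)
    (hA : ∀ s ∈ A, c * gr P s t ≤ h s ∨ (s ≠ t ∧ ∀ y, P s y ≠ 0 → y ∈ A)) :
    ∀ s ∈ A, c * gr P s t ≤ h s := by
  have key : ∀ N, ∀ s ∈ A, c * ∑ n ∈ Finset.range N, pw P n s t ≤ h s := by
    intro N
    induction N with
    | zero => intro s _; simp
    | succ N ih =>
      intro s hs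
      rcases hA s hs with h1 | ⟨hst, hy⟩
      · exact le_trans (mul_le_mul_right (partial_le_gr P _ _ _) _) h1
      · rw [partial_succ, if_neg hst, zero_add, ← ENNReal.tsum_mul_left]
        refine le_trans (ENNReal.tsum_le_tsum fun y => ?_) (hh s)
        by_cases hP : P s y = 0
        · simp [hP]
        · rw [mul_left_comm]
          exact mul_le_mul_right (ih y (hy y hP)) _
  intro s hs
  unfold gr
  rw [← ENNReal.tsum_mul_left]
  refine ENNReal.tsum_le_of_sum_range_le fun N => ?_
  rw [← Finset.mul_sum]
  exact key N s hs

lemma gr_cut (B : Finset Word) (A : Set Word) (t : Word)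
    (hA : ∀ s ∈ A, s ∈ B ∨ (s ≠ t ∧ ∀ y, P s y ≠ 0 → y ∈ A)) :
    ∀ s ∈ A, gr P s t ≤ ∑ u ∈ B, gr P s u * gr P u t := by
  intro s hs
  have := min_principle P 1 t (fun s => ∑ u ∈ B, gr P s u * gr P u t) A ?_ ?_ s hs
  · simpa using this
  · intro s
    simp_rw [Finset.mul_sum]
    rw [Summable.tsum_finsetSum (fun _ _ => ENNReal.summable)]
    refine Finset.sum_le_sum fun u _ => ?_
    simp_rw [← mul_assoc]
    rw [ENNReal.tsum_mul_right]
    exact mul_le_mul_left (gr_super P s u) _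
  · intro s hs
    rcases hA s hs with h | h
    · left
      calc 1 * gr P s t ≤ gr P s s * gr P s t := mul_le_mul_left (one_le_gr P s) _
        _ ≤ _ := Finset.single_le_sum (f := fun u => gr P s u * gr P u t)
              (fun _ _ => zero_le) h
    · exact Or.inr h

lemma gr_mul_gr_le (s v t : Word) : gr P s v * gr P v t ≤ gr P v v * gr P s t := by
  rw [mul_comm (gr P s v)]
  refine min_principle P (gr P v t) v (fun s => gr P v v * gr P s t) Set.univ ?_ ?_ s trivial
  · intro s
    simp_rw [mul_left_comm _ (gr P v v)]
    rw [ENNReal.tsum_mul_left]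
    exact mul_le_mul_right (gr_super P s t) _
  · intro s _
    by_cases h : s = v
    · left; subst h; rw [mul_comm]
    · right; exact ⟨h, fun _ _ => trivial⟩

end gen

/-! ### Path sums -/

def pathEquiv (n : ℕ) (s t : Word) :
    pathSet (Set.univ : Set Word) (n + 1) s t ≃
      (Σ u : Word, pathSet (Set.univ : Set Word) n u t) where
  toFun σ := ⟨Fin.tail σ.1 0, ⟨Fin.tail σ.1, rfl, σ.2.2.1, fun _ => trivial⟩⟩
  invFun x := ⟨Fin.cons s x.2.1, by
    refine ⟨rfl, ?_, fun _ => trivial⟩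
    rw [← Fin.succ_last, Fin.cons_succ]
    exact x.2.2.2.1⟩
  left_inv σ := by
    obtain ⟨σ, h0, h1, h2⟩ := σ
    subst h0
    exact Subtype.ext (Fin.cons_self_tail σ)
  right_inv x := by
    obtain ⟨u, τ, h0, h1, h2⟩ := x
    subst h0
    rfl

lemma weightE_cons (a : Word → Word → ℝ) (n : ℕ) (s : Word) (τ : Fin (n + 1) → Word) :
    weightE a (n + 1) (Fin.cons s τ : Fin (n + 2) → Word) =
      ENNReal.ofReal (a s (τ 0)) * weightE a n τ := by
  unfold weightE
  rw [Fin.prod_univ_succ]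
  rfl

lemma weightR_cons (a : Word → Word → ℝ) (n : ℕ) (s : Word) (τ : Fin (n + 1) → Word) :
    weightR a (n + 1) (Fin.cons s τ : Fin (n + 2) → Word) =
      a s (τ 0) * weightR a n τ := by
  unfold weightR
  rw [Fin.prod_univ_succ]
  rfl

lemma pathSet_zero (s t : Word) (σ : pathSet (Set.univ : Set Word) 0 s t) :
    σ.1 = fun _ => s := by
  obtain ⟨σ, h0, h1, h2⟩ := σ
  funext i
  have hi : i = 0 := Fin.ext (by omega)
  rw [hi]
  exact h0

lemma nStepE_eq (a : Word → Word → ℝ) (n : ℕ) (s t : Word) :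
    nStepE Set.univ a n s t = pw (fun u v => ENNReal.ofReal (a u v)) n s t := by
  induction n generalizing s with
  | zero =>
    unfold nStepE
    rw [pw_zero]
    split_ifs with h
    · subst h
      have : Unique (pathSet (Set.univ : Set Word) 0 s s) :=
        { default := ⟨fun _ => s, rfl, rfl, fun _ => trivial⟩
          uniq := fun σ => Subtype.ext (pathSet_zero s s σ) }
      rw [tsum_fintype]
      simp [weightE]
    · have : IsEmpty (pathSet (Set.univ : Set Word) 0 s t) :=
        ⟨fun σ => h (σ.2.1.symm.trans σ.2.2.1)⟩
      simp
  | succ n ih =>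
    rw [pw_succ]
    simp_rw [← ih]
    unfold nStepE
    rw [← (pathEquiv n s t).symm.tsum_eq, ENNReal.tsum_sigma']
    refine tsum_congr fun u => ?_
    rw [← ENNReal.tsum_mul_left]
    refine tsum_congr fun τ => ?_
    have := weightE_cons a n s τ.1
    rw [τ.2.1] at this
    exact this

lemma nStepR_zero (a : Word → Word → ℝ) (s t : Word) :
    nStepR Set.univ a 0 s t = if s = t then 1 else 0 := by
  unfold nStepR
  split_ifs with h
  · subst h
    have : Unique (pathSet (Set.univ : Set Word) 0 s s) :=
      { default := ⟨fun _ => s, rfl, rfl, fun _ => trivial⟩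
        uniq := fun σ => Subtype.ext (pathSet_zero s s σ) }
    rw [tsum_fintype]
    simp [weightR]
  · have : IsEmpty (pathSet (Set.univ : Set Word) 0 s t) :=
      ⟨fun σ => h (σ.2.1.symm.trans σ.2.2.1)⟩
    simp

lemma enorm_weightR_le (p a : Word → Word → ℝ) (hap : ∀ u v, |a u v| ≤ p u v) (n : ℕ)
    (σ : Fin (n + 1) → Word) : ‖weightR a n σ‖ₑ ≤ weightE p n σ := by
  unfold weightR weightE
  rw [← ofReal_norm, Finset.prod_congr rfl (fun i _ => rfl), norm_prod,
    ENNReal.ofReal_prod_of_nonneg (fun _ _ => norm_nonneg _)]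
  exact Finset.prod_le_prod' fun i _ => ENNReal.ofReal_le_ofReal (hap _ _)

lemma tsum_enorm_weightR_le (p a : Word → Word → ℝ) (hap : ∀ u v, |a u v| ≤ p u v) (n : ℕ)
    (s t : Word) : ∑' σ : pathSet (Set.univ : Set Word) n s t, ‖weightR a n σ.1‖ₑ ≤
      pw (fun u v => ENNReal.ofReal (p u v)) n s t := by
  rw [← nStepE_eq]
  exact ENNReal.tsum_le_tsum fun σ => enorm_weightR_le p a hap n σ.1

lemma enorm_nStepR_le (p a : Word → Word → ℝ) (hap : ∀ u v, |a u v| ≤ p u v) (n : ℕ)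
    (s t : Word) : ‖nStepR Set.univ a n s t‖ₑ ≤
      pw (fun u v => ENNReal.ofReal (p u v)) n s t :=
  le_trans enorm_tsum_le_tsum_enorm (tsum_enorm_weightR_le p a hap n s t)

lemma nStepR_succ (p a : Word → Word → ℝ) (hap : ∀ u v, |a u v| ≤ p u v) (n : ℕ)
    (s t : Word) (hfin : pw (fun u v => ENNReal.ofReal (p u v)) (n + 1) s t ≠ ∞) :
    nStepR Set.univ a (n + 1) s t = ∑' u, a s u * nStepR Set.univ a n u t := by
  have hs : Summable fun σ : pathSet (Set.univ : Set Word) (n + 1) s t =>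
      weightR a (n + 1) σ.1 :=
    Summable.of_enorm (ne_top_of_le_ne_top hfin (tsum_enorm_weightR_le p a hap (n + 1) s t))
  have hs2 := (pathEquiv n s t).symm.summable_iff.2 hs
  unfold nStepR
  rw [← (pathEquiv n s t).symm.tsum_eq, Summable.tsum_sigma]
  · refine tsum_congr fun u => ?_
    rw [← tsum_mul_left]
    refine tsum_congr fun τ => ?_
    have := weightR_cons a n s τ.1
    rw [τ.2.1] at this
    exact this
  · exact hs2

open Classical in
/-- Extension of a kernel on `Ω` by zero. -/
noncomputable def ext0 (Ω : Set Word) (b : Word → Word → ℝ) (s t : Word) : ℝ :=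
  if s ∈ Ω ∧ t ∈ Ω then b s t else 0

lemma nStepR_ext0 (Ω : Set Word) (b : Word → Word → ℝ) (n : ℕ) (s t : Word) (hs : s ∈ Ω) :
    nStepR Ω b n s t = nStepR Set.univ (ext0 Ω b) n s t := by
  unfold nStepR
  rw [tsum_subtype (pathSet Ω n s t) (weightR b n),
    tsum_subtype (pathSet Set.univ n s t) (weightR (ext0 Ω b) n)]
  refine tsum_congr fun σ => ?_
  by_cases h1 : σ ∈ pathSet Set.univ n s t
  · rw [Set.indicator_of_mem h1]
    by_cases h2 : ∀ i, σ i ∈ Ω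
    · rw [Set.indicator_of_mem (show σ ∈ pathSet Ω n s t from ⟨h1.1, h1.2.1, h2⟩)]
      unfold weightR
      refine Finset.prod_congr rfl fun i _ => ?_
      simp [ext0, h2]
    · rw [Set.indicator_of_notMem (fun h => h2 h.2.2)]
      push Not at h2
      obtain ⟨i, hi⟩ := h2
      symm
      cases i using Fin.cases with
      | zero => exact absurd (h1.1 ▸ hs) hi
      | succ j =>
        refine Finset.prod_eq_zero (Finset.mem_univ j) ?_
        simp [ext0, hi]
  · rw [Set.indicator_of_notMem h1,
      Set.indicator_of_notMem (fun h => h1 ⟨h.1, h.2.1, fun _ => trivial⟩)]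

/-! ### Tree geometry -/

lemma lcpLen_comm (s t : List Bool) : lcpLen s t = lcpLen t s := by
  induction s generalizing t with
  | nil => cases t <;> simp [lcpLen]
  | cons a s ih =>
    cases t with
    | nil => simp [lcpLen]
    | cons b t => simp [lcpLen, ih t, eq_comm]

lemma lcpLen_le (s t : List Bool) : lcpLen s t ≤ t.length := by
  induction s generalizing t with
  | nil => cases t <;> simp [lcpLen]
  | cons a s ih =>
    cases t with
    | nil => simp [lcpLen]
    | cons b t =>
      have := ih t
      simp only [lcpLen, List.length_cons]
      split_ifs <;> omega

lemma prefix_of_lcpLen (v r t : List Bool) (h : v.length ≤ lcpLen (v ++ r) t) : v <+: t := by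
  induction v generalizing t with
  | nil => simp
  | cons a v ih =>
    cases t with
    | nil => simp [lcpLen] at h
    | cons b t =>
      simp only [List.cons_append, lcpLen, List.length_cons] at h
      split_ifs at h with hab
      · subst hab
        exact List.cons_prefix_cons.2 ⟨rfl, ih t (by omega)⟩
      · omega

lemma treeDist_comm (s t : Word) : treeDist s t = treeDist t s := by
  unfold treeDist lcsLen
  rw [lcpLen_comm, add_comm]

lemma length_le_treeDist (s t : Word) : s.length ≤ t.length + treeDist s t := by
  unfold treeDist lcsLen
  have := lcpLen_le s.reverse t.reverse
  simp at this
  omega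

lemma lt_treeDist (a v y : Word) (hy : y ∉ Delta v) : a.length < treeDist (a ++ v) y := by
  have : lcsLen (a ++ v) y < v.length := by
    by_contra h
    push Not at h
    apply hy
    unfold lcsLen at h
    rw [List.reverse_append] at h
    have := prefix_of_lcpLen v.reverse a.reverse y.reverse (by simpa using h)
    exact List.reverse_prefix.1 this
  unfold treeDist
  simp only [List.length_append]
  omega

lemma exists_median (x s t u : Word) (hs : x <:+ s) (hu : x <:+ u) :
    ∃ v, v <:+ u ∧ x.length ≤ v.length ∧ (v <:+ s ∨ v <:+ t) ∧
      ∀ c, (c :: v) <:+ u → ¬ (c :: v) <:+ s ∧ ¬ (c :: v) <:+ t := by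
  induction u with
  | nil =>
    refine ⟨[], List.suffix_rfl, by simpa using hu, Or.inl List.nil_suffix, ?_⟩
    intro c hc
    simp at hc
  | cons d u ih =>
    by_cases h : (d :: u) <:+ s ∨ (d :: u) <:+ t
    · refine ⟨d :: u, List.suffix_rfl, hu.length_le, h, ?_⟩
      intro c hc
      have := hc.length_le
      simp at this
    · push Not at h
      rcases List.suffix_cons_iff.1 hu with h' | h'
      · exact absurd (h' ▸ hs) h.1
      · obtain ⟨v, h1, h2, h3, h4⟩ := ih h'
        refine ⟨v, List.suffix_cons_iff.2 (Or.inr h1), h2, h3, ?_⟩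
        intro c hc
        rcases List.suffix_cons_iff.1 hc with h5 | h5
        · rw [h5]; exact h
        · exact h4 c h5



lemma pw_length (P : Word → Word → ℝ≥0∞) (S : ℕ)
    (hS : ∀ s t, P s t ≠ 0 → treeDist s t ≤ S) (n : ℕ) (s t : Word) (h : pw P n s t ≠ 0) : s.length ≤ t.length + n * S := by
  induction n generalizing s with
  | zero =>
    rw [pw_zero] at h
    split_ifs at h with h'
    · simp [h']
    · exact absurd rfl h
  | succ n ih =>
    rw [pw_succ] at h
    rw [Ne, ENNReal.tsum_eq_zero, not_forall] at h
    obtain ⟨u, hu⟩ := h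
    have h1 := ih u (right_ne_zero_of_mul hu)
    have h2 := hS s u (left_ne_zero_of_mul hu)
    have h3 := length_le_treeDist s u
    rw [Nat.succ_mul]
    omega


/-! ### Harnack and Ancona inequalities -/

structure Good (P : Word → Word → ℝ≥0∞) (S : ℕ) (κ : ℝ≥0∞) : Prop where
  range : ∀ s t, P s t ≠ 0 → treeDist s t ≤ S
  one_le : 1 ≤ κ
  ne_top : κ ≠ ∞
  k1 : ∀ c v t, gr P (c :: v) t ≤ κ * gr P v t
  k2 : ∀ c v t, gr P t (c :: v) ≤ κ * gr P t v
  k3 : ∀ c v t, gr P v t ≤ κ * gr P (c :: v) t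

section harnack
variable {P : Word → Word → ℝ≥0∞} {S : ℕ} {κ : ℝ≥0∞}

lemma Good.h1 (h : Good P S κ) (a v t : Word) : gr P (a ++ v) t ≤ κ ^ a.length * gr P v t := by
  induction a with
  | nil => simp
  | cons c a ih =>
    calc gr P (c :: (a ++ v)) t ≤ κ * gr P (a ++ v) t := h.k1 _ _ _
      _ ≤ κ * (κ ^ a.length * gr P v t) := mul_le_mul_right ih _
      _ = _ := by rw [List.length_cons, pow_succ', mul_assoc]

lemma Good.h2 (h : Good P S κ) (a v t : Word) : gr P t (a ++ v) ≤ κ ^ a.length * gr P t v := by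
  induction a with
  | nil => simp
  | cons c a ih =>
    calc gr P t (c :: (a ++ v)) ≤ κ * gr P t (a ++ v) := h.k2 _ _ _
      _ ≤ κ * (κ ^ a.length * gr P t v) := mul_le_mul_right ih _
      _ = _ := by rw [List.length_cons, pow_succ', mul_assoc]

lemma Good.h3 (h : Good P S κ) (a v t : Word) : gr P v t ≤ κ ^ a.length * gr P (a ++ v) t := by
  induction a with
  | nil => simp
  | cons c a ih =>
    calc gr P v t ≤ κ ^ a.length * gr P (a ++ v) t := ih
      _ ≤ κ ^ a.length * (κ * gr P (c :: (a ++ v)) t) := mul_le_mul_right (h.k3 _ _ _) _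
      _ = _ := by rw [List.length_cons, pow_succ, mul_assoc, List.cons_append]

noncomputable def shortWords (S : ℕ) : Finset Word := (List.finite_length_le Bool S).toFinset

lemma mem_shortWords {S : ℕ} {a : Word} : a ∈ shortWords S ↔ a.length ≤ S := by
  simp [shortWords]

noncomputable def CA (S : ℕ) (κ : ℝ≥0∞) : ℝ≥0∞ :=
  1 + (shortWords S).card * (κ ^ (S + 1) * κ ^ (S + 1))

lemma cut_bound (h : Good P S κ) (c : Bool) (v s u : Word)
    (hc : gr P s u ≤ ∑ w ∈ (shortWords S).image (fun a => a ++ (c :: v)),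
      gr P s w * gr P w u) :
    gr P s u ≤ CA S κ * (gr P s v * gr P v u) := by
  refine le_trans hc ?_
  have : ∀ w ∈ (shortWords S).image (fun a => a ++ (c :: v)),
      gr P s w * gr P w u ≤ (κ ^ (S + 1) * κ ^ (S + 1)) * (gr P s v * gr P v u) := by
    intro w hw
    obtain ⟨a, ha, rfl⟩ := Finset.mem_image.1 hw
    have hl : (a ++ [c]).length ≤ S + 1 := by simpa using mem_shortWords.1 ha
    have e : a ++ c :: v = (a ++ [c]) ++ v := by simp
    have hk : κ ^ (a ++ [c]).length ≤ κ ^ (S + 1) := pow_le_pow_right₀ h.one_le hl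
    simp only [e]
    calc gr P s ((a ++ [c]) ++ v) * gr P ((a ++ [c]) ++ v) u
        ≤ (κ ^ (S + 1) * gr P s v) * (κ ^ (S + 1) * gr P v u) :=
          mul_le_mul' ((h.h2 _ _ _).trans (mul_le_mul_left hk _))
            ((h.h1 _ _ _).trans (mul_le_mul_left hk _))
      _ = _ := by ring
  refine le_trans (Finset.sum_le_card_nsmul _ _ _ this) ?_
  rw [nsmul_eq_mul, CA]
  have hcard : ((((shortWords S).image (fun a : Word => a ++ (c :: v))).card : ℕ) : ℝ≥0∞) ≤
      ((shortWords S).card : ℕ) := by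
    exact_mod_cast Finset.card_image_le (s := shortWords S) (f := fun a : Word => a ++ (c :: v))
  refine le_trans (mul_le_mul_left hcard _) ?_
  rw [← mul_assoc]
  exact mul_le_mul_left le_add_self _

lemma ancona (h : Good P S κ) (v s u : Word) (hv : v <:+ s ∨ v <:+ u)
    (hc : ∀ c, (c :: v) <:+ u → ¬ (c :: v) <:+ s) :
    gr P s u ≤ CA S κ * (gr P s v * gr P v u) := by
  have triv : ∀ x y : ℝ≥0∞, 1 ≤ x → y ≤ CA S κ * (x * y) := by
    intro x y hx
    calc y = 1 * (1 * y) := by simp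
      _ ≤ _ := mul_le_mul' le_self_add (mul_le_mul_left hx _)
  rcases hv with ⟨a, rfl⟩ | ⟨a, rfl⟩
  · rcases List.eq_nil_or_concat a with rfl | ⟨a, c, rfl⟩
    · exact triv _ _ (one_le_gr P _)
    · refine cut_bound h c v _ u ?_
      have hs : (c :: v) <:+ (a.concat c) ++ v := ⟨a, by simp⟩
      have hu : u ∉ Delta (c :: v) := fun hu => hc c hu hs
      refine gr_cut P _ (Delta (c :: v)) u ?_ _ hs
      rintro s ⟨d, rfl⟩
      by_cases hd : d.length ≤ S
      · left; exact Finset.mem_image.2 ⟨d, mem_shortWords.2 hd, rfl⟩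
      · right
        refine ⟨?_, ?_⟩
        · rintro rfl; exact hu ⟨d, rfl⟩
        · intro y hy
          by_contra hy'
          have := lt_treeDist d (c :: v) y hy'
          have := h.range _ _ hy
          omega
  · rcases List.eq_nil_or_concat a with rfl | ⟨a, c, rfl⟩
    · rw [mul_comm (gr P s _)]
      exact triv _ _ (one_le_gr P _)
    · refine cut_bound h c v _ _ ?_
      have hu : (c :: v) <:+ (a.concat c) ++ v := ⟨a, by simp⟩
      have hs : s ∉ Delta (c :: v) := fun hs => hc c hu hs
      refine gr_cut P _ ((Delta (c :: v))ᶜ ∪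
        ((shortWords S).image (fun a => a ++ (c :: v)) : Finset Word)) _ ?_ _ (Or.inl hs)
      rintro s (hs | hs)
      · right
        refine ⟨?_, ?_⟩
        · rintro rfl; exact hs hu
        · intro y hy
          by_contra hy'
          rw [Set.mem_union, not_or] at hy'
          obtain ⟨hy1, hy2⟩ := hy'
          rw [Set.notMem_compl_iff] at hy1
          obtain ⟨d, rfl⟩ := hy1
          have h1 := lt_treeDist d (c :: v) s hs
          rw [treeDist_comm] at h1
          have h2 := h.range _ _ hy
          exact hy2 (Finset.mem_coe.2 (Finset.mem_image.2
            ⟨d, mem_shortWords.2 (by omega), rfl⟩))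
      · left; exact hs

/-- Three point inequality. -/
lemma three_point (h : Good P S κ) (g₀ : ℝ≥0∞) (hg : ∀ v, gr P v v ≤ g₀) (x s t u : Word)
    (hs : x <:+ s) (ht : x <:+ t) :
    ∃ v, x.length ≤ v.length ∧ (v <:+ s ∨ v <:+ t) ∧
      gr P s u * gr P u t ≤ CA S κ * CA S κ * g₀ * gr P s t * (gr P v u * gr P u v) := by
  have key : ∀ v, gr P s u ≤ CA S κ * (gr P s v * gr P v u) →
      gr P u t ≤ CA S κ * (gr P u v * gr P v t) →
      gr P s u * gr P u t ≤ CA S κ * CA S κ * g₀ * gr P s t * (gr P v u * gr P u v) := by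
    intro v h1 h2
    calc gr P s u * gr P u t
        ≤ (CA S κ * (gr P s v * gr P v u)) * (CA S κ * (gr P u v * gr P v t)) :=
          mul_le_mul' h1 h2
      _ = CA S κ * CA S κ * (gr P s v * gr P v t) * (gr P v u * gr P u v) := by ring
      _ ≤ CA S κ * CA S κ * (g₀ * gr P s t) * (gr P v u * gr P u v) := by
          refine mul_le_mul_left (mul_le_mul_right ?_ _) _
          exact (gr_mul_gr_le P s v t).trans (mul_le_mul_left (hg v) _)
      _ = _ := by ring
  by_cases hu : x <:+ u
  · obtain ⟨v, h1, h2, h3, h4⟩ := exists_median x s t u hs hu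
    refine ⟨v, h2, h3, key v ?_ ?_⟩
    · exact ancona h v s u (Or.inr h1) fun c hc => (h4 c hc).1
    · exact ancona h v u t (Or.inl h1) fun c hc hc' => (h4 c hc').2 hc
  · refine ⟨x, le_rfl, Or.inl hs, key x ?_ ?_⟩
    · exact ancona h x s u (Or.inl hs) fun c hc _ => hu ((List.suffix_cons c x).trans hc)
    · exact ancona h x u t (Or.inr ht) fun c _ hc => hu ((List.suffix_cons c x).trans hc)

end harnack

/-! ### Summation estimates -/

section sums
variable {P : Word → Word → ℝ≥0∞} {S : ℕ} {κ : ℝ≥0∞}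

lemma diag_sum (hS : ∀ s t, P s t ≠ 0 → treeDist s t ≤ S) (q θ L : ℝ≥0∞)
    (hL : ∀ n v, pw P n v v ≤ L ^ n) (hqθ : q ≤ θ) (hθ1 : θ ≤ 1) (hθ0 : θ ≠ 0) (v : Word) :
    ∑' u : Word, q ^ u.length * (gr P v u * gr P u v) ≤
      θ ^ v.length * ((1 - (θ ^ S)⁻¹ * L)⁻¹ * (1 - L)⁻¹) := by
  have hθt : θ ^ S ≠ ∞ := ENNReal.pow_ne_top (ne_top_of_le_ne_top ENNReal.one_ne_top hθ1)
  have hθS : θ ^ S ≠ 0 := pow_ne_zero _ hθ0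
  have hpt : ∀ (n m : ℕ) (u : Word), q ^ u.length * (pw P n v u * pw P m u v) ≤
      θ ^ v.length * ((θ ^ S)⁻¹) ^ n * (pw P n v u * pw P m u v) := by
    intro n m u
    by_cases h0 : pw P n v u = 0
    · simp [h0]
    · refine mul_le_mul_left ?_ _
      have hl := pw_length P S hS n v u h0
      calc q ^ u.length ≤ θ ^ u.length := pow_le_pow_left' hqθ _
        _ = θ ^ u.length * ((θ ^ S) * (θ ^ S)⁻¹) ^ n := by
            rw [ENNReal.mul_inv_cancel hθS hθt]; simp
        _ = θ ^ (u.length + n * S) * ((θ ^ S)⁻¹) ^ n := by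
            rw [mul_pow, pow_add, mul_comm n S, pow_mul, mul_assoc]
        _ ≤ _ := mul_le_mul_left (pow_le_pow_right_of_le_one' hθ1 hl) _
  have hexp : ∀ u : Word, q ^ u.length * (gr P v u * gr P u v) =
      ∑' n, ∑' m, q ^ u.length * (pw P n v u * pw P m u v) := by
    intro u
    simp_rw [ENNReal.tsum_mul_left, ENNReal.tsum_mul_right]
    rfl
  simp_rw [hexp]
  rw [ENNReal.tsum_comm]
  calc ∑' n, ∑' u : Word, ∑' m, q ^ u.length * (pw P n v u * pw P m u v)
      ≤ ∑' n, ∑' m, θ ^ v.length * (((θ ^ S)⁻¹ * L) ^ n * L ^ m) := by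
        refine ENNReal.tsum_le_tsum fun n => ?_
        rw [ENNReal.tsum_comm]
        refine ENNReal.tsum_le_tsum fun m => ?_
        refine le_trans (ENNReal.tsum_le_tsum fun u => hpt n m u) ?_
        rw [ENNReal.tsum_mul_left, ← pw_add]
        refine le_trans (mul_le_mul_right (hL _ _) _) (le_of_eq ?_)
        rw [pow_add, mul_pow]; ring
    _ = _ := by
        simp_rw [ENNReal.tsum_mul_left, ENNReal.tsum_mul_right, ENNReal.tsum_geometric]

lemma gr_diag (L : ℝ≥0∞) (hL : ∀ n v, pw P n v v ≤ L ^ n) (v : Word) :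
    gr P v v ≤ (1 - L)⁻¹ := by
  rw [← ENNReal.tsum_geometric]
  exact ENNReal.tsum_le_tsum fun n => hL n v

noncomputable def tailsFrom (k : ℕ) (s : Word) : Finset Word :=
  s.tails.toFinset.filter (fun v => k ≤ v.length)

lemma mem_tailsFrom {k : ℕ} {s v : Word} : v ∈ tailsFrom k s ↔ v <:+ s ∧ k ≤ v.length := by
  simp [tailsFrom]

lemma tails_sum (θ : ℝ≥0∞) (k : ℕ) (s : Word) :
    ∑ v ∈ tailsFrom k s, θ ^ v.length ≤ θ ^ k * (1 - θ)⁻¹ := by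
  have hinj : Set.InjOn (fun v : Word => v.length - k) (tailsFrom k s) := by
    intro v hv w hw hvw
    rw [Finset.mem_coe, mem_tailsFrom] at hv hw
    have : v.length = w.length := by
      have := hv.2
      have := hw.2
      simp only at hvw
      omega
    exact (List.suffix_of_suffix_length_le hv.1 hw.1 this.le).eq_of_length this
  calc ∑ v ∈ tailsFrom k s, θ ^ v.length
      = ∑ v ∈ tailsFrom k s, θ ^ k * θ ^ (v.length - k) := by
        refine Finset.sum_congr rfl fun v hv => ?_
        rw [← pow_add, Nat.add_sub_cancel' (mem_tailsFrom.1 hv).2]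
    _ = ∑ i ∈ (tailsFrom k s).image (fun v : Word => v.length - k), θ ^ k * θ ^ i := by
        rw [Finset.sum_image hinj]
    _ ≤ ∑' i, θ ^ k * θ ^ i := ENNReal.sum_le_tsum _
    _ = _ := by rw [ENNReal.tsum_mul_left, ENNReal.tsum_geometric]

lemma main_sum (h : Good P S κ) (q θ L : ℝ≥0∞)
    (hL : ∀ n v, pw P n v v ≤ L ^ n) (hqθ : q ≤ θ) (hθ1 : θ ≤ 1) (hθ0 : θ ≠ 0)
    (x s t : Word) (hs : x <:+ s) (ht : x <:+ t) :
    ∑' u : Word, q ^ u.length * (gr P s u * gr P u t) ≤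
      (CA S κ * CA S κ * (1 - L)⁻¹ * (((1 - (θ ^ S)⁻¹ * L)⁻¹ * (1 - L)⁻¹) *
        (2 * (1 - θ)⁻¹))) * θ ^ x.length * gr P s t := by
  set A := CA S κ * CA S κ * (1 - L)⁻¹ with hA
  set M := (1 - (θ ^ S)⁻¹ * L)⁻¹ * (1 - L)⁻¹ with hM
  set V := tailsFrom x.length s ∪ tailsFrom x.length t with hV
  calc ∑' u : Word, q ^ u.length * (gr P s u * gr P u t)
      ≤ ∑' u : Word, ∑ v ∈ V, A * gr P s t * (q ^ u.length * (gr P v u * gr P u v)) := by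
        refine ENNReal.tsum_le_tsum fun u => ?_
        obtain ⟨v, h1, h2, h3⟩ := three_point h _ (gr_diag L hL) x s t u hs ht
        have hv : v ∈ V := by
          rw [hV, Finset.mem_union, mem_tailsFrom, mem_tailsFrom]
          tauto
        refine le_trans ?_ (Finset.single_le_sum
          (f := fun v => A * gr P s t * (q ^ u.length * (gr P v u * gr P u v)))
          (fun _ _ => zero_le) hv)
        refine le_trans (mul_le_mul_right h3 _) (le_of_eq ?_)
        rw [← hA]
        ring
    _ = A * gr P s t * ∑ v ∈ V, ∑' u : Word, (q ^ u.length * (gr P v u * gr P u v)) := by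
        rw [Summable.tsum_finsetSum (fun _ _ => ENNReal.summable), Finset.mul_sum]
        simp_rw [ENNReal.tsum_mul_left]
    _ ≤ A * gr P s t * ∑ v ∈ V, θ ^ v.length * M := by
        refine mul_le_mul_right (Finset.sum_le_sum fun v _ => ?_) _
        exact diag_sum h.range q θ L hL hqθ hθ1 hθ0 v
    _ ≤ A * gr P s t * ((2 * (θ ^ x.length * (1 - θ)⁻¹)) * M) := by
        rw [← Finset.sum_mul]
        refine mul_le_mul_right (mul_le_mul_left ?_ _) _
        rw [two_mul]
        refine le_trans ?_ (add_le_add (tails_sum θ x.length s) (tails_sum θ x.length t))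
        rw [← Finset.sum_union_inter]
        exact le_self_add
    _ = _ := by ring

end sums

/-! ### Consequences of the hypotheses -/

noncomputable def PE (p : Word → Word → ℝ) (s t : Word) : ℝ≥0∞ := ENNReal.ofReal (p s t)

lemma pw_tsum_le_one (p : Word → Word → ℝ) (hsub : Substochastic p) (n : ℕ) (s : Word) :
    ∑' t, pw (PE p) n s t ≤ 1 := by
  induction n generalizing s with
  | zero =>
    have := tsum_ite_mul s (fun _ => 1)
    simp only [mul_one] at this
    simp only [pw_zero]
    rw [this]
  | succ n ih =>
    simp_rw [pw_succ]
    rw [ENNReal.tsum_comm]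
    simp_rw [ENNReal.tsum_mul_left]
    calc ∑' u, PE p s u * ∑' t, pw (PE p) n u t ≤ ∑' u, PE p s u * 1 :=
          ENNReal.tsum_le_tsum fun u => mul_le_mul_right (ih u) _
      _ ≤ 1 := by simpa [PE] using hsub s

lemma pw_le_one (p : Word → Word → ℝ) (hsub : Substochastic p) (n : ℕ) (s t : Word) :
    pw (PE p) n s t ≤ 1 :=
  (ENNReal.le_tsum t).trans (pw_tsum_le_one p hsub n s)

lemma pw_ne_top (p : Word → Word → ℝ) (hsub : Substochastic p) (n : ℕ) (s t : Word) :
    pw (PE p) n s t ≠ ∞ :=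
  ne_top_of_le_ne_top ENNReal.one_ne_top (pw_le_one p hsub n s t)

lemma PE_range (p : Word → Word → ℝ) (S : ℕ) (h1 : H1 p S) (s t : Word)
    (h : PE p s t ≠ 0) : treeDist s t ≤ S := by
  by_contra h'
  exact h (by simp [PE, h1 s t (not_le.1 h')])

lemma toReal_pw_succ (p : Word → Word → ℝ) (hp : ∀ s t, 0 ≤ p s t) (hsub : Substochastic p)
    (n : ℕ) (s t : Word) : (pw (PE p) (n + 1) s t).toReal =
      ∑' u, p s u * (pw (PE p) n u t).toReal := by
  have hne : ∀ u, PE p s u * pw (PE p) n u t ≠ ∞ := fun u =>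
    ENNReal.mul_ne_top ENNReal.ofReal_ne_top (pw_ne_top p hsub n u t)
  rw [pw_succ, ENNReal.tsum_toReal_eq hne]
  refine tsum_congr fun u => ?_
  rw [ENNReal.toReal_mul, PE, ENNReal.toReal_ofReal (hp s u)]

lemma pw_diag (p : Word → Word → ℝ) (hp : ∀ s t, 0 ≤ p s t) (hsub : Substochastic p)
    (S : ℕ) (m : Word → ℝ) (lam : ℝ) (hlam : 0 ≤ lam) (h1 : H1 p S) (h4 : H4 p m lam)
    (n : ℕ) (v : Word) : pw (PE p) n v v ≤ ENNReal.ofReal lam ^ n := by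
  obtain ⟨hm, h4⟩ := h4
  let f : ℕ → Word → ℝ := fun n s => (pw (PE p) n s v).toReal
  have hf : ∀ n, (Function.support (f n)).Finite := by
    intro n
    refine (List.finite_length_le Bool (v.length + n * S)).subset ?_
    intro s hs
    refine pw_length (PE p) S (PE_range p S h1) n s v ?_
    intro h0
    exact hs (by simp [f, h0])
  let N : ℕ → ℝ := fun n => Real.sqrt (∑' x, m x * f n x ^ 2)
  have hnn : ∀ n, 0 ≤ ∑' x, m x * f n x ^ 2 := fun n =>
    tsum_nonneg fun x => mul_nonneg (hm x).le (sq_nonneg _)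
  have hN2 : ∀ n, N n ^ 2 = ∑' x, m x * f n x ^ 2 := fun n => Real.sq_sqrt (hnn n)
  have hN0 : ∀ n, 0 ≤ N n := fun n => Real.sqrt_nonneg _
  have hstep : ∀ n, N (n + 1) ≤ lam * N n := by
    intro n
    have h := h4 (f n) (f (n + 1)) (hf n) (hf (n + 1))
    have e : ∑' s, m s * f (n + 1) s * ∑' t, p s t * f n t = N (n + 1) ^ 2 := by
      rw [hN2]
      refine tsum_congr fun s => ?_
      rw [← toReal_pw_succ p hp hsub n s v]
      ring
    rw [e, abs_of_nonneg (sq_nonneg _)] at h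
    change N (n + 1) ^ 2 ≤ lam * N n * N (n + 1) at h
    rcases (hN0 (n + 1)).eq_or_lt with h0 | h0
    · rw [← h0]; exact mul_nonneg hlam (hN0 n)
    · rw [sq] at h
      exact le_of_mul_le_mul_right h h0
  have hpow : ∀ n, N n ≤ lam ^ n * N 0 := by
    intro n
    induction n with
    | zero => simp
    | succ n ih =>
      calc N (n + 1) ≤ lam * N n := hstep n
        _ ≤ lam * (lam ^ n * N 0) := mul_le_mul_of_nonneg_left ih hlam
        _ = _ := by ring
  have hN00 : N 0 ^ 2 = m v := by
    rw [hN2, tsum_eq_single v]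
    · simp [f, pw_zero]
    · intro x hx
      simp [f, pw_zero, hx]
  have hle : m v * f n v ^ 2 ≤ N n ^ 2 := by
    rw [hN2]
    refine Summable.le_tsum (f := fun x => m x * f n x ^ 2) ?_ v
      (fun x _ => mul_nonneg (hm x).le (sq_nonneg _))
    refine summable_of_hasFiniteSupport ((hf n).subset ?_)
    intro x hx h0
    exact hx (by simp only [h0]; simp)
  have h5 : m v * f n v ^ 2 ≤ m v * (lam ^ n) ^ 2 := by
    calc m v * f n v ^ 2 ≤ N n ^ 2 := hle
      _ ≤ (lam ^ n * N 0) ^ 2 := pow_le_pow_left₀ (hN0 n) (hpow n) 2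
      _ = _ := by rw [mul_pow, hN00]; ring
  have h6 : f n v ≤ lam ^ n :=
    (sq_le_sq₀ ENNReal.toReal_nonneg (pow_nonneg hlam n)).1 (le_of_mul_le_mul_left h5 (hm v))
  rw [← ENNReal.ofReal_pow hlam]
  exact (ENNReal.le_ofReal_iff_toReal_le (pw_ne_top p hsub n v v) (pow_nonneg hlam n)).2 h6

lemma pw_path (P : Word → Word → ℝ≥0∞) (δ : ℝ≥0∞) (k : ℕ) (w : ℕ → Word)
    (h : ∀ i < k, δ ≤ P (w i) (w (i + 1))) : δ ^ k ≤ pw P k (w 0) (w k) := by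
  induction k generalizing w with
  | zero => simp [pw_zero]
  | succ k ih =>
    have := ih (fun i => w (i + 1)) (fun i hi => h (i + 1) (by omega))
    rw [pw_succ, pow_succ']
    refine le_trans (mul_le_mul' (h 0 (by omega)) this) ?_
    exact ENNReal.le_tsum (f := fun u => P (w 0) u * pw P k u (w (k + 1))) (w (0 + 1))

lemma good_of (p : Word → Word → ℝ) (S : ℕ) (δ₀ : ℝ) (hδ₀ : δ₀ ∈ Set.Ioo (0 : ℝ) 1) (K : ℕ)
    (h1 : H1 p S) (h3 : H3 p δ₀ K) :
    Good (PE p) S ((ENNReal.ofReal δ₀ ^ K)⁻¹) := by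
  have hδ1 : ENNReal.ofReal δ₀ ≤ 1 := ENNReal.ofReal_le_one.2 hδ₀.2.le
  have hδ0 : ENNReal.ofReal δ₀ ^ K ≠ 0 := pow_ne_zero _ (ENNReal.ofReal_pos.2 hδ₀.1).ne'
  have hδt : ENNReal.ofReal δ₀ ^ K ≠ ∞ := ENNReal.pow_ne_top ENNReal.ofReal_ne_top
  have key : ∀ s t x, treeDist s t = 1 →
      ∃ k, ENNReal.ofReal δ₀ ^ K ≤ pw (PE p) k (s ++ x) (t ++ x) := by
    intro s t x hst
    obtain ⟨k, hk, u, rfl, rfl, hu⟩ := h3 s t hst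
    refine ⟨k, le_trans (pow_le_pow_right_of_le_one' hδ1 hk) ?_⟩
    exact pw_path (PE p) _ k (fun i => u i ++ x)
      (fun i hi => ENNReal.ofReal_le_ofReal (hu i hi x))
  have d1 : ∀ c : Bool, treeDist [c] [] = 1 := by
    intro c; simp [treeDist, lcsLen, lcpLen]
  have d2 : ∀ c : Bool, treeDist [] [c] = 1 := by
    intro c; simp [treeDist, lcsLen, lcpLen]
  refine ⟨PE_range p S h1, ?_, ENNReal.inv_ne_top.2 hδ0, ?_, ?_, ?_⟩
  · exact ENNReal.one_le_inv.2 (pow_le_one' hδ1 K)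
  · intro c v t
    obtain ⟨k, hk⟩ := key [] [c] v (d2 c)
    rw [← ENNReal.mul_le_iff_le_inv hδ0 hδt]
    exact (mul_le_mul_left hk _).trans (pw_mul_gr_le (PE p) k _ _ t)
  · intro c v t
    obtain ⟨k, hk⟩ := key [c] [] v (d1 c)
    rw [← ENNReal.mul_le_iff_le_inv hδ0 hδt, mul_comm]
    exact (mul_le_mul_right hk _).trans (gr_mul_pw_le (PE p) k t _ _)
  · intro c v t
    obtain ⟨k, hk⟩ := key [c] [] v (d1 c)
    rw [← ENNReal.mul_le_iff_le_inv hδ0 hδt]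
    exact (mul_le_mul_left hk _).trans (pw_mul_gr_le (PE p) k _ _ t)

/-! ### Perturbation -/

noncomputable def Dn (P : Word → Word → ℝ≥0∞) (e : Word → ℝ≥0∞) (t : Word) : ℕ → Word → ℝ≥0∞
  | 0 => fun _ => 0
  | n + 1 => fun s => e s * pw P (n + 1) s t + ∑' u, P s u * Dn P e t n u

lemma Dn_sum (P : Word → Word → ℝ≥0∞) (e : Word → ℝ≥0∞) (t s : Word) :
    ∑' n, Dn P e t n s ≤ ∑' u, e u * (gr P s u * gr P u t) := by
  refine ENNReal.tsum_le_of_sum_range_le fun N => ?_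
  induction N generalizing s with
  | zero => simp
  | succ N ih =>
    have hH : ∑' u, e u * (gr P s u * gr P u t) =
        e s * gr P s t + ∑' w, P s w * ∑' u, e u * (gr P w u * gr P u t) := by
      have e1 : ∀ w, (∑' u, e u * (gr P w u * gr P u t)) =
          ∑' u, gr P w u * (e u * gr P u t) :=
        fun w => tsum_congr fun u => by ring
      simp_rw [e1]
      rw [tsum_assoc]
      have e2 : ∀ u, gr P s u * (e u * gr P u t) =
          (if s = u then 1 else 0) * (e u * gr P u t) +
            (∑' w, P s w * gr P w u) * (e u * gr P u t) := by
        intro u; rw [← add_mul, ← gr_eq]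
      rw [tsum_congr e2, ENNReal.tsum_add, tsum_ite_mul]
    rw [hH, Finset.sum_range_succ']
    simp only [Dn, add_zero]
    rw [Finset.sum_add_distrib, ← Finset.mul_sum]
    refine add_le_add (mul_le_mul_right ?_ _) ?_
    · calc ∑ i ∈ Finset.range N, pw P (i + 1) s t ≤ ∑' i, pw P (i + 1) s t :=
            ENNReal.sum_le_tsum _
        _ ≤ gr P s t := ENNReal.tsum_comp_le_tsum_of_injective (add_left_injective 1) _
    · rw [← Summable.tsum_finsetSum (fun _ _ => ENNReal.summable)]
      refine ENNReal.tsum_le_tsum fun u => ?_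
      rw [← Finset.mul_sum]
      exact mul_le_mul_right (ih u) _

lemma pert_le (p a : Word → Word → ℝ) (hp : ∀ s t, 0 ≤ p s t) (hsub : Substochastic p)
    (hap : ∀ u v, |a u v| ≤ p u v) (Ω : Set Word) (ha : ∀ s t, t ∉ Ω → a s t = 0)
    (e : Word → ℝ≥0∞) (he : ∀ s ∈ Ω, ∀ t, ‖p s t - a s t‖ₑ ≤ e s * PE p s t)
    (t : Word) (n : ℕ) (s : Word) (hs : s ∈ Ω) :
    ‖(pw (PE p) n s t).toReal - nStepR Set.univ a n s t‖ₑ ≤ Dn (PE p) e t n s := by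
  induction n generalizing s with
  | zero =>
    rw [nStepR_zero, pw_zero]
    split_ifs <;> simp
  | succ n ih =>
    have hnorm : ∀ u, ‖(pw (PE p) n u t).toReal‖ₑ = pw (PE p) n u t := by
      intro u
      rw [Real.enorm_eq_ofReal ENNReal.toReal_nonneg, ENNReal.ofReal_toReal (pw_ne_top p hsub n u t)]
    have hpn : ∀ u, ‖p s u‖ₑ = PE p s u := fun u => Real.enorm_eq_ofReal (hp s u)
    have han : ∀ u, ‖a s u‖ₑ ≤ PE p s u := by
      intro u
      rw [← ofReal_norm]
      exact ENNReal.ofReal_le_ofReal (hap s u)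
    have hs1 : Summable fun u => p s u * (pw (PE p) n u t).toReal := by
      refine Summable.of_enorm ?_
      simp_rw [enorm_mul, hnorm, hpn]
      exact pw_ne_top p hsub (n + 1) s t
    have hs2 : Summable fun u => a s u * nStepR Set.univ a n u t := by
      refine Summable.of_enorm ?_
      refine ne_top_of_le_ne_top (pw_ne_top p hsub (n + 1) s t)
        (ENNReal.tsum_le_tsum fun u => ?_)
      rw [enorm_mul]
      exact mul_le_mul' (han u) (enorm_nStepR_le p a hap n u t)
    rw [toReal_pw_succ p hp hsub, nStepR_succ p a hap n s t (pw_ne_top p hsub (n + 1) s t),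
      ← hs1.tsum_sub hs2]
    refine le_trans enorm_tsum_le_tsum_enorm ?_
    simp only [Dn]
    rw [pw_succ, ← ENNReal.tsum_mul_left, ← ENNReal.tsum_add]
    refine ENNReal.tsum_le_tsum fun u => ?_
    have e1 : p s u * (pw (PE p) n u t).toReal - a s u * nStepR Set.univ a n u t =
        (p s u - a s u) * (pw (PE p) n u t).toReal +
          a s u * ((pw (PE p) n u t).toReal - nStepR Set.univ a n u t) := by ring
    rw [e1]
    refine le_trans (enorm_add_le _ _) (add_le_add ?_ ?_)
    · rw [enorm_mul, hnorm, ← mul_assoc]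
      exact mul_le_mul_left (he s hs u) _
    · by_cases hu : u ∈ Ω
      · rw [enorm_mul]
        exact mul_le_mul' (han u) (ih u hu)
      · simp [ha s u hu]

lemma endWord_length (ω : ℕ → Bool) (k : ℕ) : (endWord ω k).length = k := by
  simp [endWord]

lemma endWord_suffix (ω : ℕ → Bool) (j k : ℕ) (h : j ≤ k) : endWord ω j <:+ endWord ω k := by
  induction k, h using Nat.le_induction with
  | base => exact List.suffix_rfl
  | succ k _ ih =>
    have : endWord ω (k + 1) = ω k :: endWord ω k := by
      simp [endWord, List.range_succ]
    rw [this]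
    exact ih.trans (List.suffix_cons _ _)

lemma exists_theta (q lam : ℝ) (S : ℕ) (hq : q < 1) (hlam : lam < 1) :
    ∃ θ : ℝ, q < θ ∧ θ < 1 ∧ lam < θ ^ S := by
  have h1 : ∀ᶠ θ : ℝ in nhds 1, lam < θ ^ S := by
    have : Filter.Tendsto (fun θ : ℝ => θ ^ S) (nhds 1) (nhds (1 ^ S)) :=
      (continuous_pow S).tendsto 1
    rw [one_pow] at this
    exact this.eventually (lt_mem_nhds hlam)
  have h2 : ∀ᶠ θ : ℝ in nhds 1, q < θ := lt_mem_nhds hq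
  have h3 : ∀ᶠ θ : ℝ in nhdsWithin 1 (Set.Iio 1), θ < 1 := self_mem_nhdsWithin
  obtain ⟨θ, ⟨a, b⟩, c⟩ := (((h1.and h2).filter_mono nhdsWithin_le_nhds).and h3).exists
  exact ⟨θ, b, c, a⟩

lemma pert_kernel (p : Word → Word → ℝ) (hp : ∀ s t, 0 ≤ p s t)
    (S : ℕ) (δ₀ : ℝ) (hδ₀ : δ₀ ∈ Set.Ioo (0 : ℝ) 1) (h1 : H1 p S) (h2 : H2 p δ₀)
    (z : Word) (q C : ℝ) (hq : q ∈ Set.Ioo (0 : ℝ) 1) (hC : 0 < C)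
    (b : Word → Word → ℝ) (hb : Perturb p b z q C) (s : Word) (hs : s ∈ Delta z) (t : Word) :
    ‖p s t - ext0 (Delta z) b s t‖ₑ ≤
      (ENNReal.ofReal (C / δ₀ + (q ^ (z.length + S))⁻¹) * ENNReal.ofReal q ^ s.length) *
        PE p s t := by
  have hq0 := hq.1
  have hδ := hδ₀.1
  have hqs : 0 < q ^ s.length := pow_pos hq0 _
  have hqz : 0 < q ^ (z.length + S) := pow_pos hq0 _
  rw [← ofReal_norm, ← ENNReal.ofReal_pow hq0.le, PE,
    ← ENNReal.ofReal_mul (by positivity), ← ENNReal.ofReal_mul (by positivity)]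
  refine ENNReal.ofReal_le_ofReal ?_
  rw [Real.norm_eq_abs]
  rcases (hp s t).eq_or_lt with h0 | h0
  · rw [← h0]
    by_cases ht : t ∈ Delta z
    · have := (hb s t hs ht).1
      rw [← h0] at this
      simp [ext0, hs, ht, abs_nonpos_iff.1 this]
    · simp [ext0, ht]
  · by_cases ht : t ∈ Delta z
    · have h3 := (hb s t hs ht).2
      have h4 := h2 s t h0
      simp only [ext0, hs, ht, and_self, if_true]
      rw [abs_sub_comm]
      calc |b s t - p s t| ≤ C * q ^ s.length := h3
        _ = C / δ₀ * q ^ s.length * δ₀ := by field_simp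
        _ ≤ C / δ₀ * q ^ s.length * p s t := by gcongr
        _ ≤ (C / δ₀ + (q ^ (z.length + S))⁻¹) * q ^ s.length * p s t := by
            gcongr
            exact le_add_of_nonneg_right (by positivity)
    · simp only [ext0, ht, and_false, if_false, sub_zero]
      rw [abs_of_pos h0]
      obtain ⟨a, rfl⟩ := hs
      have h3 := lt_treeDist a z t ht
      have h4 : treeDist (a ++ z) t ≤ S := by
        by_contra h'
        exact h0.ne' (h1 _ _ (not_le.1 h'))
      have h5 : q ^ (z.length + S) ≤ q ^ (a ++ z).length :=
        pow_le_pow_of_le_one hq0.le hq.2.le (by rw [List.length_append]; omega)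
      calc p (a ++ z) t = (q ^ (z.length + S))⁻¹ * q ^ (z.length + S) * p (a ++ z) t := by
            rw [inv_mul_cancel₀ hqz.ne', one_mul]
        _ ≤ (q ^ (z.length + S))⁻¹ * q ^ (a ++ z).length * p (a ++ z) t := by gcongr
        _ ≤ _ := by
            gcongr
            exact le_add_of_nonneg_left (by positivity)

/-- Proposition 3.5: for a substochastic kernel `p` satisfying (H1)–(H4) and a
`q`-perturbation `b` of `p` on `Δ_z`, the boundary value at any end `ω` in the closure of
`Δ_z` of the Martin-type kernel `G_b(s,·)/G_p(e,·)` is strictly positive for all `s`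
sufficiently close to `ω`. -/
theorem prop_3_5 (p : Word → Word → ℝ) (hp : ∀ s t, 0 ≤ p s t) (hsub : Substochastic p)
    (S : ℕ) (δ₀ : ℝ) (hδ₀ : δ₀ ∈ Set.Ioo (0 : ℝ) 1) (K : ℕ)
    (m : Word → ℝ) (lam : ℝ) (hlam : lam ∈ Set.Ioo (0 : ℝ) 1)
    (h1 : H1 p S) (h2 : H2 p δ₀) (h3 : H3 p δ₀ K) (h4 : H4 p m lam)
    (z : Word) (q C : ℝ) (hq : q ∈ Set.Ioo (0 : ℝ) 1) (hC : 0 < C)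
    (b : Word → Word → ℝ) (hb : Perturb p b z q C) :
    ∀ ω : ℕ → Bool, endWord ω z.length = z →
      ∃ k, z.length ≤ k ∧ ∀ s ∈ Delta (endWord ω k),
        ∃ c > (0 : ℝ), ∃ l, z.length ≤ l ∧
          ∀ t ∈ Delta (endWord ω l),
            c * (greenE Set.univ p [] t).toReal ≤ greenR (Delta z) b s t := by
  intro ω hω
  obtain ⟨θ, hqθ, hθ1, hlθ⟩ := exists_theta q lam S hq.2 hlam.2
  have hθ0 : 0 < θ := hq.1.trans hqθ
  set κ : ℝ≥0∞ := (ENNReal.ofReal δ₀ ^ K)⁻¹ with hκ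
  have good : Good (PE p) S κ := good_of p S δ₀ hδ₀ K h1 h3
  set L : ℝ≥0∞ := ENNReal.ofReal lam with hL
  have hdiag : ∀ n v, pw (PE p) n v v ≤ L ^ n :=
    fun n v => pw_diag p hp hsub S m lam hlam.1.le h1 h4 n v
  set Θ : ℝ≥0∞ := ENNReal.ofReal θ with hΘ
  set Q : ℝ≥0∞ := ENNReal.ofReal q with hQ
  have hΘ1 : Θ < 1 := ENNReal.ofReal_lt_one.2 hθ1
  have hΘ0 : Θ ≠ 0 := (ENNReal.ofReal_pos.2 hθ0).ne'
  have hQΘ : Q ≤ Θ := ENNReal.ofReal_le_ofReal hqθ.le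
  have hL1 : L < 1 := ENNReal.ofReal_lt_one.2 hlam.2
  have hLΘ : (Θ ^ S)⁻¹ * L < 1 := by
    rw [mul_comm, ← div_eq_mul_inv]
    refine ENNReal.div_lt_of_lt_mul ?_
    rw [one_mul, hΘ, ← ENNReal.ofReal_pow hθ0.le]
    exact (ENNReal.ofReal_lt_ofReal_iff (pow_pos hθ0 S)).2 hlθ
  have hinv : ∀ y : ℝ≥0∞, y < 1 → (1 - y)⁻¹ ≠ ∞ := fun y hy =>
    ENNReal.inv_ne_top.2 (tsub_pos_of_lt hy).ne'
  have hκpow : ∀ n, κ ^ n ≠ ∞ := fun n => ENNReal.pow_ne_top good.ne_top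
  have hCA : CA S κ ≠ ∞ := by
    unfold CA
    exact ENNReal.add_ne_top.2 ⟨ENNReal.one_ne_top, ENNReal.mul_ne_top (ENNReal.natCast_ne_top _)
      (ENNReal.mul_ne_top (hκpow _) (hκpow _))⟩
  set D : ℝ≥0∞ := ENNReal.ofReal (C / δ₀ + (q ^ (z.length + S))⁻¹) with hD
  set A : ℝ≥0∞ := CA S κ * CA S κ * (1 - L)⁻¹ * (((1 - (Θ ^ S)⁻¹ * L)⁻¹ * (1 - L)⁻¹) *
        (2 * (1 - Θ)⁻¹)) with hA
  have hAt : A ≠ ∞ :=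
    ENNReal.mul_ne_top (ENNReal.mul_ne_top (ENNReal.mul_ne_top hCA hCA) (hinv _ hL1))
      (ENNReal.mul_ne_top (ENNReal.mul_ne_top (hinv _ hLΘ) (hinv _ hL1))
        (ENNReal.mul_ne_top ENNReal.ofNat_ne_top (hinv _ hΘ1)))
  have hDA : D * A ≠ ∞ := ENNReal.mul_ne_top ENNReal.ofReal_ne_top hAt
  have htend : Filter.Tendsto (fun k : ℕ => D * A * Θ ^ k) Filter.atTop (nhds 0) := by
    have := ENNReal.Tendsto.const_mul (a := D * A)
      (ENNReal.tendsto_pow_atTop_nhds_zero_of_lt_one hΘ1) (Or.inr hDA)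
    simpa using this
  have hev : ∀ᶠ k : ℕ in Filter.atTop, D * A * Θ ^ k < 2⁻¹ :=
    htend.eventually (gt_mem_nhds (by simp))
  obtain ⟨k, hk1, hk2⟩ := (hev.and (Filter.eventually_ge_atTop z.length)).exists
  refine ⟨k, hk2, ?_⟩
  intro s hs
  have hsz : s ∈ Delta z := by
    have h := endWord_suffix ω z.length k hk2
    rw [hω] at h
    exact h.trans hs
  have hκs1 : 1 ≤ (κ ^ s.length).toReal := by
    rw [← ENNReal.toReal_one]
    exact ENNReal.toReal_mono (hκpow _) (one_le_pow₀ good.one_le)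
  have hκs : 0 < (κ ^ s.length).toReal := lt_of_lt_of_le one_pos hκs1
  refine ⟨(2 * (κ ^ s.length).toReal)⁻¹, by positivity, k, hk2, ?_⟩
  intro t ht
  have hfin0 : gr (PE p) [] t ≠ ∞ := by
    have := good.h3 t [] t
    rw [List.append_nil] at this
    exact ne_top_of_le_ne_top (ENNReal.mul_ne_top (hκpow _)
      (ne_top_of_le_ne_top (hinv _ hL1) (gr_diag L hdiag t))) this
  have hfin : gr (PE p) s t ≠ ∞ := by
    have := good.h1 s [] t
    rw [List.append_nil] at this
    exact ne_top_of_le_ne_top (ENNReal.mul_ne_top (hκpow _) hfin0) this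
  have hle : (gr (PE p) [] t).toReal ≤ (κ ^ s.length).toReal * (gr (PE p) s t).toReal := by
    have := good.h3 s [] t
    rw [List.append_nil] at this
    rw [← ENNReal.toReal_mul]
    exact ENNReal.toReal_mono (ENNReal.mul_ne_top (hκpow _) hfin) this
  have hgE : greenE Set.univ p [] t = gr (PE p) [] t :=
    tsum_congr fun n => nStepE_eq p n [] t
  have hgR : greenR (Delta z) b s t = ∑' n, nStepR Set.univ (ext0 (Delta z) b) n s t :=
    tsum_congr fun n => nStepR_ext0 (Delta z) b n s t hsz
  have hap : ∀ u v, |ext0 (Delta z) b u v| ≤ p u v := by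
    intro u v
    unfold ext0
    split_ifs with h
    · exact (hb u v h.1 h.2).1
    · simpa using hp u v
  have hs1 : Summable fun n => (pw (PE p) n s t).toReal := ENNReal.summable_toReal hfin
  have hs2 : Summable fun n => nStepR Set.univ (ext0 (Delta z) b) n s t :=
    Summable.of_enorm (ne_top_of_le_ne_top hfin
      (ENNReal.tsum_le_tsum fun n => enorm_nStepR_le p _ hap n s t))
  have hgt : (gr (PE p) s t).toReal = ∑' n, (pw (PE p) n s t).toReal :=
    ENNReal.tsum_toReal_eq fun n => pw_ne_top p hsub n s t
  have hdiff : ‖(gr (PE p) s t).toReal - greenR (Delta z) b s t‖ₑ ≤ 2⁻¹ * gr (PE p) s t := by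
    rw [hgt, hgR, ← hs1.tsum_sub hs2]
    calc _ ≤ ∑' n, ‖(pw (PE p) n s t).toReal -
            nStepR Set.univ (ext0 (Delta z) b) n s t‖ₑ := enorm_tsum_le_tsum_enorm
      _ ≤ ∑' n, Dn (PE p) (fun u => D * Q ^ u.length) t n s := by
          refine ENNReal.tsum_le_tsum fun n => ?_
          refine pert_le p _ hp hsub hap (Delta z) ?_ _ ?_ t n s hsz
          · intro u v hv
            simp [ext0, hv]
          · intro u hu v
            exact pert_kernel p hp S δ₀ hδ₀ h1 h2 z q C hq hC b hb u hu v
      _ ≤ ∑' u : Word, D * Q ^ u.length * (gr (PE p) s u * gr (PE p) u t) := Dn_sum _ _ _ _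
      _ = D * ∑' u : Word, Q ^ u.length * (gr (PE p) s u * gr (PE p) u t) := by
          rw [← ENNReal.tsum_mul_left]
          exact tsum_congr fun u => mul_assoc _ _ _
      _ ≤ D * (A * Θ ^ (endWord ω k).length * gr (PE p) s t) :=
          mul_le_mul_right (main_sum good Q Θ L hdiag hQΘ hΘ1.le hΘ0 (endWord ω k) s t hs ht) _
      _ = (D * A * Θ ^ k) * gr (PE p) s t := by rw [endWord_length]; ring
      _ ≤ 2⁻¹ * gr (PE p) s t := mul_le_mul_left hk1.le _
  have hdr : (gr (PE p) s t).toReal - greenR (Delta z) b s t ≤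
      2⁻¹ * (gr (PE p) s t).toReal := by
    refine le_trans (le_abs_self _) ?_
    have h := ENNReal.toReal_mono (ENNReal.mul_ne_top (by simp) hfin) hdiff
    rw [toReal_enorm, ENNReal.toReal_mul] at h
    simpa using h
  rw [hgE]
  calc (2 * (κ ^ s.length).toReal)⁻¹ * (gr (PE p) [] t).toReal
      ≤ (2 * (κ ^ s.length).toReal)⁻¹ *
          ((κ ^ s.length).toReal * (gr (PE p) s t).toReal) :=
        mul_le_mul_of_nonneg_left hle (by positivity)
    _ = 2⁻¹ * (gr (PE p) s t).toReal := by field_simp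
    _ ≤ _ := by linarith

end Paper
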